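/- arXiv:2411.05973 — 3 statements merged into one kernel-verified Lean document; each statement's English description precedes it below -/
import Mathlib

section
/- Call a subset B of the 12 octahedron edges even if every point S_j lies on an even number of edges of B. The group G acts on such subsets componentwise. Then the number of G-orbits of even subsets is exactly 14; two of these orbits are the singleton orbits of the empty set and of the full set of all 12 octahedron edges, and the remaining 12 orbits correspond to the dihedral f-tilings whose prototiles are the Möbius triangle and an isosceles triangle derived from B𝒪 by b-edge assignments. -/
open Matrix

attribute [local instance] Classical.propDecidable

/-- The six octahedron points `S_1, …, S_6` (indexed by `Fin 6`, so `S 0 = S_1` etc.). -/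
def S : Fin 6 → Fin 3 → ℝ :=
  ![![0, 0, 1], ![1, 0, 0], ![0, 1, 0], ![-1, 0, 0], ![0, -1, 0], ![0, 0, -1]]

/-- A `3×3` signed permutation matrix (element of the octahedral group `G`). -/
def IsSignedPerm (M : Matrix (Fin 3) (Fin 3) ℝ) : Prop :=
  Mᵀ * M = 1 ∧ (∀ i, ∃! j, M i j ≠ 0) ∧ (∀ j, ∃! i, M i j ≠ 0) ∧
    ∀ i j, M i j ≠ 0 → M i j = 1 ∨ M i j = -1

/-- The 12 octahedron edges: unordered pairs `{S_j, S_l}` with `⟨S_j, S_l⟩ = 0`. -/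
noncomputable def octEdges : Finset (Sym2 (Fin 6)) :=
  Finset.univ.filter fun e => ∃ j l : Fin 6, e = s(j, l) ∧ S j ⬝ᵥ S l = 0

/-- A subset `B` of the octahedron edges is even if every point `S_j` lies on an even
number of edges of `B`. -/
noncomputable def IsEvenSubset (B : Finset (Sym2 (Fin 6))) : Prop :=
  B ⊆ octEdges ∧ ∀ j : Fin 6, Even (B.filter fun e => j ∈ e).card

/-- `B'` is the image of `B` under the componentwise action of the matrix `σ`. -/
def edgeAct (σ : Matrix (Fin 3) (Fin 3) ℝ) (B B' : Finset (Sym2 (Fin 6))) : Prop :=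
  ∀ e' : Sym2 (Fin 6), e' ∈ B' ↔
    ∃ e ∈ B, ∃ j l j' l' : Fin 6, e = s(j, l) ∧ e' = s(j', l') ∧
      σ.mulVec (S j) = S j' ∧ σ.mulVec (S l) = S l'

/-- `B'` is obtained from `B` by the action of some `σ ∈ G`. -/
noncomputable def evenRel (B B' : {B : Finset (Sym2 (Fin 6)) // IsEvenSubset B}) : Prop :=
  ∃ σ : Matrix (Fin 3) (Fin 3) ℝ, IsSignedPerm σ ∧ edgeAct σ B.1 B'.1


namespace Oct

/-- Integer version of the points. -/
def Sz : Fin 6 → Fin 3 → ℤ :=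
  ![![0, 0, 1], ![1, 0, 0], ![0, 1, 0], ![-1, 0, 0], ![0, -1, 0], ![0, 0, -1]]

/-- The antipode. -/
def anti : Fin 6 → Fin 6 := ![5, 3, 4, 1, 2, 0]

theorem S_eq (j : Fin 6) (i : Fin 3) : S j i = ((Sz j i : ℤ) : ℝ) := by
  fin_cases j <;> fin_cases i <;> simp [S, Sz]

theorem Sz_inj : Function.Injective Sz := by
  have : ∀ a b, Sz a = Sz b → a = b := by decide +kernel
  exact fun a b => this a b

theorem S_inj : Function.Injective S := by
  intro a b h
  apply Sz_inj
  funext i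
  have := congrFun h i
  rw [S_eq, S_eq] at this
  exact_mod_cast this

theorem S_dot (j l : Fin 6) : S j ⬝ᵥ S l = ((Sz j ⬝ᵥ Sz l : ℤ) : ℝ) := by
  simp [dotProduct, S_eq]

theorem S_anti (j : Fin 6) : S (anti j) = - S j := by
  have h : ∀ j i, Sz (anti j) i = - Sz j i := by decide +kernel
  funext i
  rw [Pi.neg_apply, S_eq, S_eq, h]; push_cast; rfl

/-- Explicit list of edges. -/
def octL : List (Fin 6 × Fin 6) :=
  [(0, 1), (0, 2), (0, 3), (0, 4), (1, 2), (1, 4), (1, 5), (2, 3), (2, 5), (3, 4), (3, 5), (4, 5)]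

def octE : Finset (Sym2 (Fin 6)) := (octL.map fun p => s(p.1, p.2)).toFinset

theorem mem_octE : ∀ j l : Fin 6, s(j, l) ∈ octE ↔ Sz j ⬝ᵥ Sz l = 0 := by decide +kernel

theorem mem_octEdges (j l : Fin 6) : s(j, l) ∈ octEdges ↔ S j ⬝ᵥ S l = 0 := by
  unfold octEdges
  simp only [Finset.mem_filter, Finset.mem_univ, true_and]
  constructor
  · rintro ⟨a, b, h, h0⟩
    rcases Sym2.eq_iff.1 h with ⟨rfl, rfl⟩ | ⟨rfl, rfl⟩
    · exact h0
    · rwa [dotProduct_comm]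
  · exact fun h => ⟨j, l, rfl, h⟩

theorem octEdges_eq : octEdges = octE := by
  ext e
  induction e using Sym2.ind with
  | _ j l =>
    rw [mem_octEdges, mem_octE, S_dot]
    exact_mod_cast Iff.rfl

theorem even_iff (B : Finset (Sym2 (Fin 6))) :
    IsEvenSubset B ↔ B ⊆ octE ∧ ∀ j : Fin 6, Even (B.filter fun e => j ∈ e).card := by
  unfold IsEvenSubset
  rw [octEdges_eq]

/-- A signed permutation matrix permutes the points. -/
theorem exists_pi (M : Matrix (Fin 3) (Fin 3) ℝ) (hM : IsSignedPerm M) :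
    ∃ π : Equiv.Perm (Fin 6), (∀ j, M.mulVec (S j) = S (π j)) ∧ (∀ j, π (anti j) = anti (π j)) := by
  obtain ⟨hO, -, hC, hV⟩ := hM
  have key : ∀ c : Fin 3, ∃ k, (fun i => M i c) = S k := by
    intro c
    obtain ⟨r, hr, hu⟩ := hC c
    have hz : ∀ i, i ≠ r → M i c = 0 := fun i hi => by
      by_contra h
      exact hi (hu i h)
    rcases hV r c hr with h | h
    · refine ⟨![1, 2, 0] r, ?_⟩
      funext i
      by_cases hi : i = r
      · subst hi; rw [h]; fin_cases i <;> simp [S]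
      · rw [hz i hi]; revert hi; fin_cases i <;> fin_cases r <;> simp [S]
    · refine ⟨![3, 4, 5] r, ?_⟩
      funext i
      by_cases hi : i = r
      · subst hi; rw [h]; fin_cases i <;> simp [S]
      · rw [hz i hi]; revert hi; fin_cases i <;> fin_cases r <;> simp [S]
  have hneg : ∀ j, M.mulVec (S (anti j)) = - M.mulVec (S j) := fun j => by
    rw [S_anti, Matrix.mulVec_neg]
  have hex : ∀ j, ∃ k, M.mulVec (S j) = S k := by
    have pos : ∀ j ∈ ({0, 1, 2} : Finset (Fin 6)), ∃ k, M.mulVec (S j) = S k := by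
      intro j hj
      obtain ⟨k, hk⟩ := key (![2, 0, 1, 0, 0, 0] j)
      refine ⟨k, ?_⟩
      rw [← hk]
      funext i
      fin_cases hj <;> simp [S, Matrix.mulVec, dotProduct, Fin.sum_univ_three]
    intro j
    by_cases hj : j ∈ ({0, 1, 2} : Finset (Fin 6))
    · exact pos j hj
    · have h2 : ∀ j : Fin 6, j ∉ ({0, 1, 2} : Finset (Fin 6)) →
          anti j ∈ ({0, 1, 2} : Finset (Fin 6)) ∧ anti (anti j) = j := by decide
      obtain ⟨h3, h4⟩ := h2 j hj
      obtain ⟨k, hk⟩ := pos _ h3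
      refine ⟨anti k, ?_⟩
      rw [S_anti, ← hk, ← hneg, h4]
  choose f hf using hex
  have hinj : Function.Injective f := by
    intro a b hab
    apply S_inj
    have h1 : M.mulVec (S a) = M.mulVec (S b) := by rw [hf, hf, hab]
    have h2 := congrArg (Mᵀ.mulVec) h1
    simpa [Matrix.mulVec_mulVec, hO] using h2
  refine ⟨Equiv.ofBijective f (Finite.injective_iff_bijective.1 hinj), hf, fun j => ?_⟩
  apply S_inj
  simp only [Equiv.ofBijective_apply]
  rw [← hf, hneg, hf, S_anti]

theorem edgeAct_iff (M : Matrix (Fin 3) (Fin 3) ℝ) (π : Equiv.Perm (Fin 6))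
    (h : ∀ j, M.mulVec (S j) = S (π j)) (B B' : Finset (Sym2 (Fin 6))) :
    edgeAct M B B' ↔ ∀ j l, s(π j, π l) ∈ B' ↔ s(j, l) ∈ B := by
  have hS : ∀ j j', M.mulVec (S j) = S j' ↔ π j = j' := fun j j' => by
    rw [h]; exact S_inj.eq_iff
  unfold edgeAct
  simp only [hS]
  constructor
  · intro H j l
    rw [H]
    constructor
    · rintro ⟨e, he, a, b, a', b', rfl, h2, rfl, rfl⟩
      rcases Sym2.eq_iff.1 h2 with ⟨h3, h4⟩ | ⟨h3, h4⟩
      · rw [π.injective h3, π.injective h4]; exact he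
      · rw [π.injective h3, π.injective h4, Sym2.eq_swap]; exact he
    · intro he
      exact ⟨_, he, j, l, _, _, rfl, rfl, rfl, rfl⟩
  · intro H e'
    constructor
    · induction e' using Sym2.ind with
      | _ x y =>
        intro he
        refine ⟨s(π.symm x, π.symm y), ?_, π.symm x, π.symm y, x, y, rfl, rfl, by simp, by simp⟩
        rw [← H]; simpa using he
    · rintro ⟨e, he, a, b, a', b', rfl, rfl, rfl, rfl⟩
      exact (H a b).2 he

/-- Number of ordered pairs, antipodal pairs, triangles. -/
def inv1 (B : Finset (Sym2 (Fin 6))) : ℕ :=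
  (Finset.univ.filter fun p : Fin 6 × Fin 6 => s(p.1, p.2) ∈ B).card

def inv2 (B : Finset (Sym2 (Fin 6))) : ℕ :=
  (Finset.univ.filter fun p : Fin 6 × Fin 6 =>
    s(p.1, p.2) ∈ B ∧ s(anti p.1, anti p.2) ∈ B).card

def inv3 (B : Finset (Sym2 (Fin 6))) : ℕ :=
  (Finset.univ.filter fun p : Fin 6 × Fin 6 × Fin 6 =>
    s(p.1, p.2.1) ∈ B ∧ s(p.2.1, p.2.2) ∈ B ∧ s(p.1, p.2.2) ∈ B).card

theorem inv_eq (B B' : Finset (Sym2 (Fin 6))) (π : Equiv.Perm (Fin 6))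
    (h : ∀ j l, s(π j, π l) ∈ B' ↔ s(j, l) ∈ B) (ha : ∀ j, π (anti j) = anti (π j)) :
    inv1 B = inv1 B' ∧ inv2 B = inv2 B' ∧ inv3 B = inv3 B' := by
  refine ⟨?_, ?_, ?_⟩
  · refine Finset.card_equiv (π.prodCongr π) fun p => ?_
    simp [h]
  · refine Finset.card_equiv (π.prodCongr π) fun p => ?_
    simp [h, ← ha]
  · refine Finset.card_equiv (π.prodCongr (π.prodCongr π)) fun p => ?_
    simp [h]

/-- Adjacency masks of the representatives. -/
def R : Fin 14 → ℕ :=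
  ![0, 12614, 6442588230, 10746071114, 173052998, 155464030, 26453487942, 26349704262, 13065393222, 26332115294, 10796416350, 32774690910, 6494272862, 32947748190]

def rep (k : Fin 14) : Finset (Sym2 (Fin 6)) :=
  ((octL.filter fun p => (R k).testBit (6 * p.1.val + p.2.val)).map fun p => s(p.1, p.2)).toFinset

theorem mem_rep : ∀ (k : Fin 14) (x y : Fin 6),
    s(x, y) ∈ rep k ↔ (R k).testBit (6 * x.val + y.val) = true := by decide +kernel

theorem rep_even (k : Fin 14) : IsEvenSubset (rep k) := by
  rw [even_iff]
  revert k
  decide +kernel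

theorem rep_inv : ∀ k k' : Fin 14, inv1 (rep k) = inv1 (rep k') → inv2 (rep k) = inv2 (rep k') →
    inv3 (rep k) = inv3 (rep k') → k = k' := by
  have h : ((List.finRange 14).map fun k => (inv1 (rep k), inv2 (rep k), inv3 (rep k))).Nodup := by
    decide +kernel
  intro k k' h1 h2 h3
  exact List.inj_on_of_nodup_map h (List.mem_finRange k) (List.mem_finRange k')
    (by simp only [h1, h2, h3])

/-- The action on points with `S_1, S_2, S_3` sent to `a, b, c`. -/
def piF (a b c : Fin 6) : Fin 6 → Fin 6 := ![a, b, c, anti b, anti c, anti a]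

def valid (a b c : Fin 6) : Bool :=
  a != b && a != anti b && a != c && a != anti c && b != c && b != anti c

def mz (a b c : Fin 6) (i j : Fin 3) : ℤ := ![Sz b i, Sz c i, Sz a i] j

def Mz (a b c : Fin 6) : Matrix (Fin 3) (Fin 3) ℤ := Matrix.of (mz a b c)

theorem Mz_mulVec : ∀ a b c, valid a b c = true →
    ∀ j i, (Mz a b c).mulVec (Sz j) i = Sz (piF a b c j) i := by
  decide +kernel

theorem Mz_orth : ∀ a b c : Fin 6, valid a b c = true →
    ∀ i j : Fin 3, ∑ k, mz a b c k i * mz a b c k j = if i = j then 1 else 0 := by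
  decide +kernel

theorem Mz_row : ∀ a b c : Fin 6, valid a b c = true →
    ∀ i : Fin 3, ∃ j : Fin 3, mz a b c i j ≠ 0 ∧ ∀ j' : Fin 3, mz a b c i j' ≠ 0 → j' = j := by
  decide +kernel

theorem Mz_col : ∀ a b c, valid a b c = true →
    ∀ j, ∃ i, mz a b c i j ≠ 0 ∧ ∀ i', mz a b c i' j ≠ 0 → i' = i := by
  decide +kernel

theorem Mz_val : ∀ a b c : Fin 6, valid a b c = true →
    ∀ i j : Fin 3, mz a b c i j ≠ 0 → mz a b c i j = 1 ∨ mz a b c i j = -1 := by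
  decide +kernel

theorem piF_inj : ∀ a b c, valid a b c = true → ∀ x y, piF a b c x = piF a b c y → x = y := by
  decide +kernel

theorem exists_M (a b c : Fin 6) (hv : valid a b c = true) :
    ∃ (M : Matrix (Fin 3) (Fin 3) ℝ) (π : Equiv.Perm (Fin 6)), IsSignedPerm M ∧
      (∀ j, M.mulVec (S j) = S (π j)) ∧ ∀ j, π j = piF a b c j := by
  have h1 := Mz_mulVec a b c hv
  have h2 := Mz_orth a b c hv
  have h3 := Mz_row a b c hv
  have h4 := Mz_col a b c hv
  have h5 := Mz_val a b c hv
  have h6 := piF_inj a b c hv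
  refine ⟨(Mz a b c).map (Int.cast), Equiv.ofBijective (piF a b c) (Finite.injective_iff_bijective.1 (fun x y => h6 x y)),
    ⟨?_, ?_, ?_, ?_⟩, ?_, fun j => rfl⟩
  · ext i j
    have := congrArg (fun m : ℤ => (m : ℝ)) (h2 i j)
    simp only [Matrix.mul_apply, Matrix.transpose_apply, Matrix.map_apply, Matrix.one_apply, Mz, Matrix.of_apply] at this ⊢
    push_cast at this
    exact this
  · intro i
    obtain ⟨j, hj, hu⟩ := h3 i
    exact ⟨j, by simpa [Mz] using hj, fun j' hj' => hu j' (by simpa [Mz] using hj')⟩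
  · intro i
    obtain ⟨j, hj, hu⟩ := h4 i
    exact ⟨j, by simpa [Mz] using hj, fun j' hj' => hu j' (by simpa [Mz] using hj')⟩
  · intro i j hij
    rcases h5 i j (by simpa [Mz] using hij) with h | h
    · left; simp [Mz, h]
    · right; simp [Mz, h]
  · intro j
    funext i
    have := congrArg (fun m : ℤ => (m : ℝ)) (h1 j i)
    simp only [Matrix.mulVec, dotProduct, Matrix.map_apply, S_eq, Equiv.ofBijective_apply] at this ⊢
    push_cast at this
    exact this

/-- Does the given map send the bit list to the mask? -/
def chk (r : ℕ) (f : Fin 6 → Fin 6) (bs : List Bool) : Bool :=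
  (octL.zip bs).all fun q => r.testBit (6 * (f q.1.1).val + (f q.1.2).val) == q.2

def search (bs : List Bool) : Bool :=
  (List.finRange 14).any fun k => (List.finRange 6).any fun a => (List.finRange 6).any fun b =>
    (List.finRange 6).any fun c => valid a b c && chk (R k) (piF a b c) bs

/-- Parity of four bits. -/
def par (a b c d : Bool) : Bool := !(a ^^ b ^^ c ^^ d)

theorem search_all : ∀ b0 b1 b2 b3 : Bool, par b0 b1 b2 b3 = true →
    ∀ b4 b5 b6 : Bool, par b0 b4 b5 b6 = true →
    ∀ b7 b8 : Bool, par b1 b4 b7 b8 = true →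
    ∀ b9 b10 : Bool, par b2 b7 b9 b10 = true →
    ∀ b11 : Bool, par b3 b5 b9 b11 = true → par b6 b8 b10 b11 = true →
    search [b0, b1, b2, b3, b4, b5, b6, b7, b8, b9, b10, b11] = true := by
  decide +kernel

theorem par_of_even (B : Finset (Sym2 (Fin 6))) (hB : B ⊆ octE) (j : Fin 6)
    (h : Even (B.filter fun e => j ∈ e).card) (e1 e2 e3 e4 : Sym2 (Fin 6))
    (h4 : octE.filter (fun e => j ∈ e) = {e1, e2, e3, e4}) (hn : [e1, e2, e3, e4].Nodup) :
    par (decide (e1 ∈ B)) (decide (e2 ∈ B)) (decide (e3 ∈ B)) (decide (e4 ∈ B)) = true := by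
  have hf : B.filter (fun e => j ∈ e) = ({e1, e2, e3, e4} : Finset _).filter (· ∈ B) := by
    rw [← h4]
    ext e
    simp only [Finset.mem_filter]
    constructor
    · rintro ⟨x, y⟩; exact ⟨⟨hB x, y⟩, x⟩
    · rintro ⟨⟨x, y⟩, z⟩; exact ⟨z, y⟩
  simp only [List.nodup_cons, List.mem_cons, not_or, List.not_mem_nil, not_false_eq_true,
    and_true] at hn
  obtain ⟨⟨n1, n2, n3⟩, ⟨n4, n5⟩, n6, -⟩ := hn
  rw [hf, Finset.card_filter, Finset.sum_insert (by simp [n1, n2, n3]),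
    Finset.sum_insert (by simp [n4, n5]), Finset.sum_insert (by simp [n6]),
    Finset.sum_singleton] at h
  by_cases p1 : e1 ∈ B <;> by_cases p2 : e2 ∈ B <;> by_cases p3 : e3 ∈ B <;>
    by_cases p4 : e4 ∈ B <;> simp only [p1, p2, p3, p4, if_true, if_false] at h ⊢ <;>
    revert h <;> decide

theorem exists_rep (B : Finset (Sym2 (Fin 6))) (hB : IsEvenSubset B) :
    ∃ k M, IsSignedPerm M ∧ edgeAct M B (rep k) := by
  obtain ⟨hs, he⟩ := (even_iff B).1 hB
  have hsearch := search_all _ _ _ _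
    (par_of_even B hs 0 (he 0) s(0, 1) s(0, 2) s(0, 3) s(0, 4) (by decide +kernel) (by decide +kernel))
    _ _ _
    (par_of_even B hs 1 (he 1) s(0, 1) s(1, 2) s(1, 4) s(1, 5) (by decide +kernel) (by decide +kernel))
    _ _
    (par_of_even B hs 2 (he 2) s(0, 2) s(1, 2) s(2, 3) s(2, 5) (by decide +kernel) (by decide +kernel))
    _ _
    (par_of_even B hs 3 (he 3) s(0, 3) s(2, 3) s(3, 4) s(3, 5) (by decide +kernel) (by decide +kernel))
    _
    (par_of_even B hs 4 (he 4) s(0, 4) s(1, 4) s(3, 4) s(4, 5) (by decide +kernel) (by decide +kernel))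
    (par_of_even B hs 5 (he 5) s(1, 5) s(2, 5) s(3, 5) s(4, 5) (by decide +kernel) (by decide +kernel))
  unfold search at hsearch
  simp only [List.any_eq_true, Bool.and_eq_true] at hsearch
  obtain ⟨k, -, a, -, b, -, c, -, hv, hc⟩ := hsearch
  obtain ⟨M, π, hM, hπ, hπF⟩ := exists_M a b c hv
  refine ⟨k, M, hM, (edgeAct_iff M π hπ _ _).2 ?_⟩
  have hbits : ∀ p ∈ octL, (s(π p.1, π p.2) ∈ rep k ↔ s(p.1, p.2) ∈ B) := by
    simp only [chk, octL, List.zip_cons_cons, List.zip_nil_right, List.all_cons, List.all_nil, Bool.and_eq_true,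
      beq_iff_eq, and_true] at hc
    intro p hp
    rw [mem_rep, hπF, hπF]
    simp only [octL, List.mem_cons, List.not_mem_nil, or_false] at hp
    obtain ⟨c0, c1, c2, c3, c4, c5, c6, c7, c8, c9, c10, c11⟩ := hc
    rcases hp with rfl | rfl | rfl | rfl | rfl | rfl | rfl | rfl | rfl | rfl | rfl | rfl
    · rw [c0, decide_eq_true_iff]
    · rw [c1, decide_eq_true_iff]
    · rw [c2, decide_eq_true_iff]
    · rw [c3, decide_eq_true_iff]
    · rw [c4, decide_eq_true_iff]
    · rw [c5, decide_eq_true_iff]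
    · rw [c6, decide_eq_true_iff]
    · rw [c7, decide_eq_true_iff]
    · rw [c8, decide_eq_true_iff]
    · rw [c9, decide_eq_true_iff]
    · rw [c10, decide_eq_true_iff]
    · rw [c11, decide_eq_true_iff]
  intro j l
  by_cases hjl : s(j, l) ∈ octE
  · obtain ⟨p, hp, hpe⟩ : ∃ p ∈ octL, s(p.1, p.2) = s(j, l) := by
      simpa [octE] using hjl
    have := hbits p hp
    rw [hpe] at this
    rw [← this]
    rcases Sym2.eq_iff.1 hpe with ⟨h1, h2⟩ | ⟨h1, h2⟩
    · rw [h1, h2]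
    · rw [h1, h2, Sym2.eq_swap]
  · refine iff_of_false (fun h => hjl ?_) (fun h => hjl (hs h))
    have h1 := ((even_iff _).1 (rep_even k)).1 h
    rw [← octEdges_eq, mem_octEdges] at h1 ⊢
    rw [← hπ, ← hπ] at h1
    rw [Matrix.dotProduct_mulVec, Matrix.vecMul_mulVec] at h1
    simpa [hM.1] using h1

theorem inv_rel (B B' : {B : Finset (Sym2 (Fin 6)) // IsEvenSubset B}) (h : evenRel B B') :
    (inv1 B.1, inv2 B.1, inv3 B.1) = (inv1 B'.1, inv2 B'.1, inv3 B'.1) := by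
  obtain ⟨M, hM, hact⟩ := h
  obtain ⟨π, hπ, ha⟩ := exists_pi M hM
  obtain ⟨h1, h2, h3⟩ := inv_eq _ _ π ((edgeAct_iff M π hπ _ _).1 hact) ha
  rw [h1, h2, h3]

theorem card_quot : Nat.card (Quot evenRel) = 14 := by
  have hb : Function.Bijective
      (fun k : Fin 14 => Quot.mk evenRel ⟨rep k, rep_even k⟩) := by
    constructor
    · intro k k' h
      have h2 := congrArg (Quot.lift (fun B : {B : Finset (Sym2 (Fin 6)) // IsEvenSubset B} =>
        (inv1 B.1, inv2 B.1, inv3 B.1)) inv_rel) h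
      simp only [Prod.mk.injEq] at h2
      exact rep_inv k k' h2.1 h2.2.1 h2.2.2
    · intro q
      induction q using Quot.ind with
      | _ B =>
        obtain ⟨k, M, hM, hact⟩ := exists_rep B.1 B.2
        exact ⟨k, (Quot.sound ⟨M, hM, hact⟩).symm⟩
  rw [← Nat.card_congr (Equiv.ofBijective _ hb), Nat.card_fin]

end Oct

/-- There are exactly `14` `G`-orbits of even subsets of the 12 octahedron edges; the
empty set and the full set of octahedron edges are even subsets whose orbits are
singletons, and the remaining `12` orbits correspond to the dihedral f-tilings with
prototiles the Möbius triangle and an isosceles triangle derived from `B𝒪` by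
`b`-edge assignments. -/
theorem stmt_7 :
    Nat.card (Quot evenRel) = 14 ∧
    IsEvenSubset ∅ ∧ IsEvenSubset octEdges ∧
    (∀ (σ : Matrix (Fin 3) (Fin 3) ℝ) (B' : Finset (Sym2 (Fin 6))),
      IsSignedPerm σ → edgeAct σ ∅ B' → B' = ∅) ∧
    (∀ (σ : Matrix (Fin 3) (Fin 3) ℝ) (B' : Finset (Sym2 (Fin 6))),
      IsSignedPerm σ → edgeAct σ octEdges B' → B' = octEdges) := by
  refine ⟨Oct.card_quot, ?_, ?_, ?_, ?_⟩
  · rw [Oct.even_iff]; decide +kernel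
  · rw [Oct.octEdges_eq, Oct.even_iff]; decide +kernel
  · intro σ B' _ h
    ext e
    rw [h e]
    simp
  · intro σ B' hσ h
    obtain ⟨π, hπ, -⟩ := Oct.exists_pi σ hσ
    have h2 := (Oct.edgeAct_iff σ π hπ _ _).1 h
    ext e
    induction e using Sym2.ind with
    | _ x y =>
      have h3 := h2 (π.symm x) (π.symm y)
      simp only [Equiv.apply_symm_apply] at h3
      rw [h3, Oct.mem_octEdges, Oct.mem_octEdges]
      have hx := hπ (π.symm x)
      have hy := hπ (π.symm y)
      simp only [Equiv.apply_symm_apply] at hx hy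
      rw [← hx, ← hy, Matrix.dotProduct_mulVec, Matrix.vecMul_mulVec]
      simp [hσ.1]
end

section
/- Call a subset A of the 12 cube edges odd-regular if every point T_i lies on an odd number of edges of A (there are exactly 32 such subsets). The group G acts on such subsets componentwise. Then the number of G-orbits of odd-regular subsets is exactly 6; one of these orbits is that of the full set of all 12 cube edges (corresponding to B𝒪), and the remaining 5 orbits correspond to the dihedral f-tilings whose prototiles are the Möbius triangle and an isosceles triangle derived from B𝒪 by a-edge assignments. -/
section Frozen

open Matrix

attribute [local instance] Classical.propDecidable

/-- `τ = (2√2+1)/7`. -/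
noncomputable def tau : ℝ := (2 * Real.sqrt 2 + 1) / 7

/-- The eight cube points `T_1, …, T_8` (indexed by `Fin 8`, so `T 0 = T_1` etc.). -/
noncomputable def T : Fin 8 → Fin 3 → ℝ :=
  ![tau • ![1, 1, 1], tau • ![-1, 1, 1], tau • ![-1, -1, 1], tau • ![1, -1, 1],
    tau • ![1, 1, -1], tau • ![-1, 1, -1], tau • ![-1, -1, -1], tau • ![1, -1, -1]]

/-- The 12 cube edges: unordered pairs `{T_i, T_k}` such that `T_i` and `T_k` differ
in exactly one coordinate. -/
noncomputable def cubeEdges : Finset (Sym2 (Fin 8)) :=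
  Finset.univ.filter fun e => ∃ i k : Fin 8, e = s(i, k) ∧
    (Finset.univ.filter fun c : Fin 3 => T i c ≠ T k c).card = 1

/-- A subset `A` of the cube edges is odd-regular if every point `T_i` lies on an odd
number of edges of `A`. -/
noncomputable def IsOddRegular (A : Finset (Sym2 (Fin 8))) : Prop :=
  A ⊆ cubeEdges ∧ ∀ i : Fin 8, Odd (A.filter fun e => i ∈ e).card

/-- `A'` is obtained from `A` by the componentwise action of some `σ ∈ G`. -/
noncomputable def oddRel (A A' : {A : Finset (Sym2 (Fin 8)) // IsOddRegular A}) : Prop :=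
  ∃ σ : Matrix (Fin 3) (Fin 3) ℝ, IsSignedPerm σ ∧
    ∀ e' : Sym2 (Fin 8), e' ∈ A'.1 ↔
      ∃ e ∈ A.1, ∃ i k i' k' : Fin 8, e = s(i, k) ∧ e' = s(i', k') ∧
        σ.mulVec (T i) = T i' ∧ σ.mulVec (T k) = T k'

end Frozen

section Comb

/-- sign bits of the cube points (`true` means negative). -/
def sb (v : Fin 8) (c : Fin 3) : Bool :=
  match c with
  | 0 => v = 1 || v = 2 || v = 5 || v = 6
  | 1 => v = 2 || v = 3 || v = 6 || v = 7
  | 2 => 4 ≤ v.val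

/-- the vertex with given sign bits -/
def vtx (a b c : Bool) : Fin 8 :=
  match a, b, c with
  | false, false, false => 0
  | true, false, false => 1
  | true, true, false => 2
  | false, true, false => 3
  | false, false, true => 4
  | true, false, true => 5
  | true, true, true => 6
  | false, true, true => 7

/-- The edges as ordered pairs. -/
def eu : Fin 12 → Fin 8 := ![0, 0, 0, 1, 1, 2, 2, 3, 4, 4, 5, 6]
def ev : Fin 12 → Fin 8 := ![1, 3, 4, 2, 5, 3, 6, 7, 5, 7, 6, 7]

def ed (j : Fin 12) : Sym2 (Fin 8) := s(eu j, ev j)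

/-- index of the edge joining two vertices -/
def eidx (u v : Fin 8) : Fin 12 :=
  (![![0, 0, 0, 1, 2, 0, 0, 0], ![0, 0, 3, 0, 0, 4, 0, 0], ![0, 3, 0, 5, 0, 0, 6, 0],
    ![1, 0, 5, 0, 0, 0, 0, 7], ![2, 0, 0, 0, 0, 8, 0, 9], ![0, 4, 0, 0, 8, 0, 10, 0],
    ![0, 0, 6, 0, 0, 10, 0, 11], ![0, 0, 0, 7, 9, 0, 11, 0]] : Fin 8 → Fin 8 → Fin 12) u v

/-- the three edges at a vertex -/
def inA : Fin 8 → Fin 12 := ![0, 0, 3, 1, 2, 4, 6, 7]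
def inB : Fin 8 → Fin 12 := ![1, 3, 5, 5, 8, 8, 10, 9]
def inC : Fin 8 → Fin 12 := ![2, 4, 6, 7, 9, 10, 11, 11]

def lst : List ℕ :=
  [212, 255, 449, 490, 594, 633, 839, 876, 1164, 1191, 1433, 1458, 1546, 1569, 1823, 1844,
   2079, 2100, 2314, 2337, 2713, 2738, 2956, 2983, 3143, 3180, 3410, 3449, 3777, 3818, 4052, 4095]

/-- bitmask of the `t`-th odd-regular set -/
def msk (t : Fin 32) : ℕ := lst.getD t.val 0

def cls (t : Fin 32) : Fin 6 :=
  ([0, 1, 2, 3, 2, 3, 3, 4, 2, 3, 3, 4, 0, 2, 1, 3, 3, 2, 2, 0, 4, 3, 3, 1, 4, 3, 3, 1, 3,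
    1, 1, 5] : List (Fin 6)).getD t.val 0

def rep : Fin 6 → Fin 32 := ![0, 1, 2, 3, 7, 31]

def oddAt (m : ℕ) (i : Fin 8) : Bool :=
  (m.testBit (inA i).val).xor ((m.testBit (inB i).val).xor (m.testBit (inC i).val))

/-- action on vertices -/
def vact (f0 f1 f2 : Fin 3) (s0 s1 s2 : Bool) (v : Fin 8) : Fin 8 :=
  vtx (s0.xor (sb v f0)) (s1.xor (sb v f1)) (s2.xor (sb v f2))

/-- action on edges -/
def eact (f0 f1 f2 : Fin 3) (s0 s1 s2 : Bool) (j : Fin 12) : Fin 12 :=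
  eidx (vact f0 f1 f2 s0 s1 s2 (eu j)) (vact f0 f1 f2 s0 s1 s2 (ev j))

theorem sb_inj : ∀ u v : Fin 8, sb u 0 = sb v 0 → sb u 1 = sb v 1 → sb u 2 = sb v 2 → u = v := by
  decide

theorem sb_vtx : ∀ a b c : Bool, sb (vtx a b c) 0 = a ∧ sb (vtx a b c) 1 = b ∧
    sb (vtx a b c) 2 = c := by
  decide

theorem ed_inj : ∀ i j : Fin 12, ed i = ed j → i = j := by
  decide +kernel

theorem mem_ed : ∀ (i : Fin 8) (j : Fin 12), i ∈ ed j ↔ j = inA i ∨ j = inB i ∨ j = inC i := by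
  decide +kernel

theorem in_ne : ∀ i : Fin 8, inA i ≠ inB i ∧ inA i ≠ inC i ∧ inB i ≠ inC i := by
  decide +kernel

theorem ed_diff : ∀ i k : Fin 8, (Finset.univ.filter fun c : Fin 3 => sb i c ≠ sb k c).card = 1 ↔
    ∃ j, s(i, k) = ed j := by
  decide +kernel

theorem odd_iff : ∀ a b : Fin 64, (∀ i, oddAt (64 * a.val + b.val) i = true) →
    ∃ t, msk t = 64 * a.val + b.val := by
  decide +kernel

theorem msk_odd : ∀ t : Fin 32, ∀ i, oddAt (msk t) i = true := by
  decide +kernel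

theorem msk_inj : ∀ t t' : Fin 32, (∀ j : Fin 12, (msk t).testBit j.val = (msk t').testBit j.val) →
    t = t' := by
  decide +kernel

theorem msk_last : ∀ j : Fin 12, (msk 31).testBit j.val = true := by
  decide +kernel

theorem eact_ed : ∀ (f0 f1 f2 : Fin 3) (s0 s1 s2 : Bool), f0 ≠ f1 → f0 ≠ f2 → f1 ≠ f2 →
    ∀ j, s(vact f0 f1 f2 s0 s1 s2 (eu j), vact f0 f1 f2 s0 s1 s2 (ev j)) =
      ed (eact f0 f1 f2 s0 s1 s2 j) := by
  decide +kernel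

theorem eact_surj : ∀ (f0 f1 f2 : Fin 3) (s0 s1 s2 : Bool), f0 ≠ f1 → f0 ≠ f2 → f1 ≠ f2 →
    ∀ j, ∃ i, eact f0 f1 f2 s0 s1 s2 i = j := by
  decide +kernel

theorem eact_inj (f0 f1 f2 : Fin 3) (s0 s1 s2 : Bool) (n1 : f0 ≠ f1) (n2 : f0 ≠ f2)
    (n3 : f1 ≠ f2) (i j : Fin 12)
    (h : eact f0 f1 f2 s0 s1 s2 i = eact f0 f1 f2 s0 s1 s2 j) : i = j :=
  Finite.injective_iff_surjective.2 (eact_surj f0 f1 f2 s0 s1 s2 n1 n2 n3) h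

/-- number of edges in each class -/
def csize : Fin 6 → ℕ := ![4, 8, 4, 6, 6, 12]

theorem csize_eq : ∀ t : Fin 32,
    (Finset.univ.filter fun j : Fin 12 => (msk t).testBit j.val = true).card = csize (cls t) := by
  decide +kernel

theorem cls_eq_aux : ∀ t t' : Fin 32, cls t ≠ cls t' → csize (cls t) = csize (cls t') →
    ∀ (f0 f1 f2 : Fin 3), f0 ≠ f1 → f0 ≠ f2 → f1 ≠ f2 → ∀ (s0 s1 s2 : Bool),
    ¬ (∀ j, (msk t').testBit (eact f0 f1 f2 s0 s1 s2 j).val = (msk t).testBit j.val) := by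
  decide +kernel

theorem cls_eq (f0 f1 f2 : Fin 3) (n1 : f0 ≠ f1) (n2 : f0 ≠ f2) (n3 : f1 ≠ f2)
    (s0 s1 s2 : Bool) (t t' : Fin 32)
    (h : ∀ j, (msk t').testBit (eact f0 f1 f2 s0 s1 s2 j).val = (msk t).testBit j.val) :
    cls t = cls t' := by
  by_contra hc
  refine cls_eq_aux t t' hc ?_ f0 f1 f2 n1 n2 n3 s0 s1 s2 h
  rw [← csize_eq, ← csize_eq]
  refine Finset.card_bijective (eact f0 f1 f2 s0 s1 s2)
    ⟨fun a b => eact_inj f0 f1 f2 s0 s1 s2 n1 n2 n3 a b,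
      eact_surj f0 f1 f2 s0 s1 s2 n1 n2 n3⟩ ?_
  intro j
  simp [h j]

theorem cls_rep : ∀ c, cls (rep c) = c := by
  decide +kernel

theorem rep_rel : ∀ t : Fin 32, ∃ (f0 f1 f2 : Fin 3), f0 ≠ f1 ∧ f0 ≠ f2 ∧ f1 ≠ f2 ∧
    ∃ (s0 s1 s2 : Bool),
    ∀ j, (msk (rep (cls t))).testBit (eact f0 f1 f2 s0 s1 s2 j).val = (msk t).testBit j.val := by
  decide +kernel

end Comb

section Main

open Matrix

attribute [local instance] Classical.propDecidable

/-- sign -/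
noncomputable def sg (b : Bool) : ℝ := if b = true then -1 else 1

theorem sg_xor (a b : Bool) : sg (a.xor b) = sg a * sg b := by
  cases a <;> cases b <;> simp [sg]

theorem sg_inj {a b : Bool} (h : sg a = sg b) : a = b := by
  cases a <;> cases b <;> simp [sg] at h ⊢ <;> norm_num at h

theorem tau_pos : 0 < tau := by
  unfold tau; positivity

theorem T_eq (v : Fin 8) (c : Fin 3) : T v c = tau * sg (sb v c) := by
  fin_cases v <;> fin_cases c <;> simp [T, sg, sb]

theorem T_ne_iff (u v : Fin 8) (c : Fin 3) : T u c ≠ T v c ↔ sb u c ≠ sb v c := by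
  rw [T_eq, T_eq]
  constructor
  · intro h h'
    exact h (by rw [h'])
  · intro h h'
    exact h (sg_inj (mul_left_cancel₀ tau_pos.ne' h'))

theorem T_inj {u v : Fin 8} (h : T u = T v) : u = v := by
  have key : ∀ c, sb u c = sb v c := fun c => by
    by_contra hc
    exact (T_ne_iff u v c).2 hc (congrFun h c)
  exact sb_inj u v (key 0) (key 1) (key 2)

theorem mem_cubeEdges (e : Sym2 (Fin 8)) : e ∈ cubeEdges ↔ ∃ j, e = ed j := by
  unfold cubeEdges
  simp only [Finset.mem_filter, Finset.mem_univ, true_and, T_ne_iff]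
  constructor
  · rintro ⟨i, k, rfl, h⟩
    refine (ed_diff i k).1 ?_
    convert h
  · rintro ⟨j, rfl⟩
    refine ⟨eu j, ev j, rfl, ?_⟩
    have := (ed_diff (eu j) (ev j)).2 ⟨j, rfl⟩
    convert this

/-- decode a bitmask -/
noncomputable def dec (m : ℕ) : Finset (Sym2 (Fin 8)) :=
  Finset.univ.filter fun e => ∃ j : Fin 12, e = ed j ∧ m.testBit j.val = true

theorem mem_dec (m : ℕ) (e : Sym2 (Fin 8)) :
    e ∈ dec m ↔ ∃ j : Fin 12, e = ed j ∧ m.testBit j.val = true := by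
  simp [dec]

theorem ed_mem_dec (m : ℕ) (j : Fin 12) : ed j ∈ dec m ↔ m.testBit j.val = true := by
  rw [mem_dec]
  constructor
  · rintro ⟨k, h, hk⟩
    rw [ed_inj _ _ h]; exact hk
  · exact fun h => ⟨j, rfl, h⟩

theorem dec_sub (m : ℕ) : dec m ⊆ cubeEdges := by
  intro e he
  obtain ⟨j, hj, -⟩ := (mem_dec m e).1 he
  exact (mem_cubeEdges e).2 ⟨j, hj⟩

theorem odd_dec (m : ℕ) (i : Fin 8) :
    Odd ((dec m).filter fun e => i ∈ e).card ↔ oddAt m i = true := by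
  have h1 : (dec m).filter (fun e => i ∈ e) =
      (({inA i, inB i, inC i} : Finset (Fin 12)).filter
        fun j => m.testBit j.val = true).image ed := by
    ext e
    simp only [Finset.mem_filter, Finset.mem_image, Finset.mem_insert, Finset.mem_singleton,
      mem_dec]
    constructor
    · rintro ⟨⟨j, rfl, hj⟩, hi⟩
      exact ⟨j, ⟨(mem_ed i j).1 hi, hj⟩, rfl⟩
    · rintro ⟨j, ⟨hi, hj⟩, rfl⟩
      exact ⟨⟨j, rfl, hj⟩, (mem_ed i j).2 hi⟩
  obtain ⟨n1, n2, n3⟩ := in_ne i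
  rw [h1, Finset.card_image_of_injective _ (fun a b h => ed_inj a b h), Finset.card_filter,
    Finset.sum_insert (by simp [n1, n2]), Finset.sum_insert (by simp [n3]), Finset.sum_singleton,
    oddAt]
  cases m.testBit (inA i).val <;> cases m.testBit (inB i).val <;>
    cases m.testBit (inC i).val <;> simp <;> norm_num [Nat.odd_iff]

theorem isOdd_dec (m : ℕ) : IsOddRegular (dec m) ↔ ∀ i, oddAt m i = true := by
  unfold IsOddRegular
  constructor
  · intro h i
    exact (odd_dec m i).1 (h.2 i)
  · intro h
    exact ⟨dec_sub m, fun i => (odd_dec m i).2 (h i)⟩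

theorem exists_dec (A : Finset (Sym2 (Fin 8))) (h : A ⊆ cubeEdges) :
    ∃ m < 4096, A = dec m := by
  refine ⟨Nat.ofBits (fun j : Fin 12 => decide (ed j ∈ A)), Nat.ofBits_lt_two_pow _, ?_⟩
  ext e
  rw [mem_dec]
  constructor
  · intro he
    obtain ⟨j, rfl⟩ := (mem_cubeEdges e).1 (h he)
    refine ⟨j, rfl, ?_⟩
    rw [Nat.testBit_ofBits_lt _ _ j.2]
    simpa using he
  · rintro ⟨j, rfl, hj⟩
    rw [Nat.testBit_ofBits_lt _ _ j.2] at hj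
    simpa using hj

/-- the parametrization of odd-regular sets -/
noncomputable def par (t : Fin 32) : {A : Finset (Sym2 (Fin 8)) // IsOddRegular A} :=
  ⟨dec (msk t), (isOdd_dec _).2 (msk_odd t)⟩

theorem par_inj : Function.Injective par := by
  intro t t' h
  have h' : dec (msk t) = dec (msk t') := congrArg Subtype.val h
  apply msk_inj
  intro j
  rw [Bool.eq_iff_iff, ← ed_mem_dec, ← ed_mem_dec, h']

theorem par_surj : Function.Surjective par := by
  rintro ⟨A, hA⟩
  obtain ⟨m, hm, rfl⟩ := exists_dec A hA.1
  have h := (isOdd_dec m).1 hA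
  have hm' : 64 * (m / 64) + m % 64 = m := Nat.div_add_mod m 64
  obtain ⟨t, ht⟩ := odd_iff ⟨m / 64, by omega⟩ ⟨m % 64, by omega⟩ (by simpa only [hm'] using h)
  refine ⟨t, Subtype.ext ?_⟩
  simp only [hm'] at ht
  simp only [par, ht]

/-- monomial matrix -/
noncomputable def mon (f : Fin 3 → Fin 3) (s : Fin 3 → Bool) : Matrix (Fin 3) (Fin 3) ℝ :=
  fun i j => if f i = j then sg (s i) else 0

theorem sg_ne (b : Bool) : sg b ≠ 0 := by
  cases b <;> simp [sg]

theorem sg_sq (b : Bool) : sg b * sg b = 1 := by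
  cases b <;> simp [sg]

theorem mon_signed (f : Fin 3 → Fin 3) (s : Fin 3 → Bool) (hf : Function.Injective f) :
    IsSignedPerm (mon f s) := by
  have hs : Function.Surjective f := Finite.surjective_of_injective hf
  have hne : ∀ i j, mon f s i j ≠ 0 ↔ f i = j := by
    intro i j
    by_cases h : f i = j <;> simp [mon, h, sg_ne]
  refine ⟨?_, ?_, ?_, ?_⟩
  · ext a b
    obtain ⟨i, rfl⟩ := hs a
    rw [Matrix.mul_apply, Finset.sum_eq_single i]
    · by_cases h : f i = b
      · subst h
        simp [mon, sg_sq]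
      · simp [mon, h]
    · intro k _ hk
      have : f k ≠ f i := fun h => hk (hf h)
      simp [mon, this]
    · simp
  · intro i
    exact ⟨f i, (hne _ _).2 rfl, fun j hj => ((hne _ _).1 hj).symm⟩
  · intro j
    obtain ⟨i, rfl⟩ := hs j
    exact ⟨i, (hne _ _).2 rfl, fun k hk => hf ((hne _ _).1 hk)⟩
  · intro i j h
    have := (hne _ _).1 h
    simp only [mon, this, if_true]
    cases s i <;> simp [sg]

theorem signed_mon (σ : Matrix (Fin 3) (Fin 3) ℝ) (h : IsSignedPerm σ) :
    ∃ f s, Function.Injective f ∧ σ = mon f s := by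
  obtain ⟨-, hr, hc, hv⟩ := h
  choose f hf hf' using hr
  refine ⟨f, fun i => decide (σ i (f i) = -1), ?_, ?_⟩
  · intro a b hab
    exact (hc (f a)).unique (hf a) (by rw [hab]; exact hf b)
  · ext i j
    by_cases h : f i = j
    · subst h
      rcases hv i (f i) (hf i) with h1 | h1
      · have : ¬ ((1 : ℝ) = -1) := by norm_num
        simp [mon, sg, h1, this]
      · simp [mon, sg, h1]
    · simp only [mon, h, if_false]
      by_contra h0
      exact h (hf' i j h0).symm

theorem mon_mulVec (f : Fin 3 → Fin 3) (s : Fin 3 → Bool) (v : Fin 8) :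
    (mon f s).mulVec (T v) = T (vact (f 0) (f 1) (f 2) (s 0) (s 1) (s 2) v) := by
  have h1 : ∀ i, (mon f s).mulVec (T v) i = tau * sg ((s i).xor (sb v (f i))) := by
    intro i
    simp only [Matrix.mulVec, dotProduct, mon, ite_mul, zero_mul, Finset.sum_ite_eq,
      Finset.mem_univ, if_true, T_eq, sg_xor]
    ring
  obtain ⟨h2, h3, h4⟩ := sb_vtx ((s 0).xor (sb v (f 0))) ((s 1).xor (sb v (f 1)))
    ((s 2).xor (sb v (f 2)))
  ext i
  rw [h1, T_eq, vact]
  fin_cases i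
  · exact congrArg (fun b => tau * sg b) h2.symm
  · exact congrArg (fun b => tau * sg b) h3.symm
  · exact congrArg (fun b => tau * sg b) h4.symm

theorem rel_iff (f : Fin 3 → Fin 3) (s : Fin 3 → Bool) (hf : Function.Injective f) (m m' : ℕ) :
    (∀ e' : Sym2 (Fin 8), e' ∈ dec m' ↔
      ∃ e ∈ dec m, ∃ i k i' k' : Fin 8, e = s(i, k) ∧ e' = s(i', k') ∧
        (mon f s).mulVec (T i) = T i' ∧ (mon f s).mulVec (T k) = T k') ↔
    ∀ j, m'.testBit (eact (f 0) (f 1) (f 2) (s 0) (s 1) (s 2) j).val = m.testBit j.val := by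
  have n1 : f 0 ≠ f 1 := fun h => absurd (hf h) (by simp)
  have n2 : f 0 ≠ f 2 := fun h => absurd (hf h) (by simp)
  have n3 : f 1 ≠ f 2 := fun h => absurd (hf h) (by simp)
  have hed := eact_ed (f 0) (f 1) (f 2) (s 0) (s 1) (s 2) n1 n2 n3
  have hsurj := eact_surj (f 0) (f 1) (f 2) (s 0) (s 1) (s 2) n1 n2 n3
  have hinj := eact_inj (f 0) (f 1) (f 2) (s 0) (s 1) (s 2) n1 n2 n3
  have key : ∀ e' : Sym2 (Fin 8), (∃ e ∈ dec m, ∃ i k i' k' : Fin 8, e = s(i, k) ∧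
      e' = s(i', k') ∧ (mon f s).mulVec (T i) = T i' ∧ (mon f s).mulVec (T k) = T k') ↔
      ∃ j : Fin 12, e' = ed (eact (f 0) (f 1) (f 2) (s 0) (s 1) (s 2) j) ∧
        m.testBit j.val = true := by
    intro e'
    constructor
    · rintro ⟨e, he, i, k, i', k', rfl, rfl, hi, hk⟩
      obtain ⟨j, hj, hm⟩ := (mem_dec _ _).1 he
      refine ⟨j, ?_, hm⟩
      rw [mon_mulVec] at hi hk
      rw [← T_inj hi, ← T_inj hk, ← hed j]
      rw [ed, Sym2.eq_iff] at hj
      rcases hj with ⟨rfl, rfl⟩ | ⟨rfl, rfl⟩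
      · rfl
      · exact Sym2.eq_swap
    · rintro ⟨j, rfl, hm⟩
      exact ⟨ed j, (ed_mem_dec _ _).2 hm, eu j, ev j, _, _, rfl, (hed j).symm,
        mon_mulVec f s _, mon_mulVec f s _⟩
  simp only [key]
  constructor
  · intro h j
    rw [Bool.eq_iff_iff, ← ed_mem_dec, h]
    constructor
    · rintro ⟨k, hk, hm⟩
      rw [hinj _ _ (ed_inj _ _ hk)]
      exact hm
    · exact fun hm => ⟨j, rfl, hm⟩
  · intro h e'
    rw [mem_dec]
    constructor
    · rintro ⟨j, rfl, hj⟩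
      obtain ⟨k, rfl⟩ := hsurj j
      exact ⟨k, rfl, by rw [← h]; exact hj⟩
    · rintro ⟨j, rfl, hj⟩
      exact ⟨_, rfl, by rw [h]; exact hj⟩

theorem par_rel_cls (t t' : Fin 32) (h : oddRel (par t) (par t')) : cls t = cls t' := by
  obtain ⟨σ, hσ, h⟩ := h
  obtain ⟨f, s, hf, rfl⟩ := signed_mon σ hσ
  have n1 : f 0 ≠ f 1 := fun h => absurd (hf h) (by simp)
  have n2 : f 0 ≠ f 2 := fun h => absurd (hf h) (by simp)
  have n3 : f 1 ≠ f 2 := fun h => absurd (hf h) (by simp)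
  exact cls_eq _ _ _ n1 n2 n3 _ _ _ t t' ((rel_iff f s hf _ _).1 h)

theorem par_rel_rep (t : Fin 32) : oddRel (par t) (par (rep (cls t))) := by
  obtain ⟨f0, f1, f2, n1, n2, n3, s0, s1, s2, h⟩ := rep_rel t
  have hf : Function.Injective ![f0, f1, f2] := by
    intro a b hab
    fin_cases a <;> fin_cases b <;> simp_all
  exact ⟨mon ![f0, f1, f2] ![s0, s1, s2], mon_signed _ _ hf,
    (rel_iff ![f0, f1, f2] ![s0, s1, s2] hf _ _).2 h⟩

noncomputable def parE : Fin 32 ≃ {A : Finset (Sym2 (Fin 8)) // IsOddRegular A} :=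
  Equiv.ofBijective par ⟨par_inj, par_surj⟩

theorem parE_symm_par (t : Fin 32) : parE.symm (par t) = t := parE.symm_apply_apply t

noncomputable def quotE : Quot oddRel ≃ Fin 6 where
  toFun := Quot.lift (fun A => cls (parE.symm A)) (by
    intro A B h
    obtain ⟨t, rfl⟩ := par_surj A
    obtain ⟨t', rfl⟩ := par_surj B
    simp only [parE_symm_par]
    exact par_rel_cls t t' h)
  invFun c := Quot.mk _ (par (rep c))
  left_inv := by
    intro q
    induction q using Quot.ind with
    | mk A =>
      obtain ⟨t, rfl⟩ := par_surj A
      simp only [parE_symm_par]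
      exact (Quot.sound (par_rel_rep t)).symm
  right_inv := by
    intro c
    simp only [parE_symm_par]
    exact cls_rep c

/-- There are exactly `32` odd-regular subsets of the 12 cube edges, falling into
exactly `6` `G`-orbits; the full set of cube edges is odd-regular (its orbit
corresponds to `B𝒪`), and the remaining `5` orbits correspond to the dihedral
f-tilings with prototiles the Möbius triangle and an isosceles triangle derived from
`B𝒪` by `a`-edge assignments. -/
theorem stmt_8 :
    Nat.card {A : Finset (Sym2 (Fin 8)) // IsOddRegular A} = 32 ∧
    Nat.card (Quot oddRel) = 6 ∧
    IsOddRegular cubeEdges := by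
  refine ⟨?_, ?_, ?_⟩
  · rw [← Nat.card_congr parE]
    simp
  · rw [Nat.card_congr quotE]
    simp
  · have h : cubeEdges = dec (msk 31) := by
      ext e
      rw [mem_cubeEdges, mem_dec]
      constructor
      · rintro ⟨j, hj⟩
        exact ⟨j, hj, msk_last j⟩
      · rintro ⟨j, hj, -⟩
        exact ⟨j, hj⟩
    rw [h]
    exact (par 31).2

end Main
end

section
/- For a subset C of the 24 candidate pairs, let Γ_C be the simple graph on the 18 vertices {T'_1,…,T'_4,T_5,…,T_8,S_1,…,S_6,S_2',…,S_5'} whose edge set is the union of the base edges and the pairs {T,S} with (T;S) ∈ C. Then among the graphs Γ_C for which every vertex of Γ_C has even degree, there are exactly 30 graph-isomorphism classes; one class (that of the full candidate set C) corresponds to the monohedral tiling FB𝒪, and the remaining 29 classes correspond to the dihedral f-tilings whose prototiles are the Möbius triangle and the kite derived from FB𝒪. -/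
open Matrix

attribute [local instance] Classical.propDecidable

/-- The 18 vertices: `pt 0,…,pt 3` are `T'_1,…,T'_4`; `pt 4,…,pt 7` are `T_5,…,T_8`;
`pt 8,…,pt 13` are `S_1,…,S_6`; `pt 14,…,pt 17` are `S_2',…,S_5'`. -/
noncomputable def pt : Fin 18 → Fin 3 → ℝ :=
  ![tau • ![Real.sqrt 2, 0, 1], tau • ![0, Real.sqrt 2, 1],
    tau • ![-Real.sqrt 2, 0, 1], tau • ![0, -Real.sqrt 2, 1],
    tau • ![1, 1, -1], tau • ![-1, 1, -1], tau • ![-1, -1, -1], tau • ![1, -1, -1],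
    ![0, 0, 1], ![1, 0, 0], ![0, 1, 0], ![-1, 0, 0], ![0, -1, 0], ![0, 0, -1],
    (1 / Real.sqrt 2) • ![1, -1, 0], (1 / Real.sqrt 2) • ![1, 1, 0],
    (1 / Real.sqrt 2) • ![-1, 1, 0], (1 / Real.sqrt 2) • ![-1, -1, 0]]

/-- The base edges: top square, bottom square, the `S`-edges, and the eight fixed
ridge edges. -/
def baseEdges : Finset (Sym2 (Fin 18)) :=
  { s(0, 1), s(1, 2), s(2, 3), s(3, 0),
    s(4, 5), s(5, 6), s(6, 7), s(7, 4),
    s(8, 14), s(8, 15), s(8, 16), s(8, 17),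
    s(13, 9), s(13, 10), s(13, 11), s(13, 12),
    s(9, 14), s(9, 15), s(10, 15), s(10, 16),
    s(11, 16), s(11, 17), s(12, 17), s(12, 14),
    s(0, 9), s(1, 10), s(2, 11), s(3, 12),
    s(4, 15), s(5, 16), s(6, 17), s(7, 14) }

/-- The 24 candidate pairs `(T; S)`. -/
def candPairs : Finset (Fin 18 × Fin 18) :=
  { (0, 8), (0, 14), (0, 15), (1, 8), (1, 15), (1, 16),
    (2, 8), (2, 16), (2, 17), (3, 8), (3, 17), (3, 14),
    (4, 9), (4, 10), (4, 13), (5, 10), (5, 11), (5, 13),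
    (6, 11), (6, 12), (6, 13), (7, 12), (7, 9), (7, 13) }

/-- The simple graph `Γ_C` on the 18 vertices whose edge set is the union of the base
edges and the pairs `{T, S}` with `(T; S) ∈ C`. -/
noncomputable def Γ (C : Finset (Fin 18 × Fin 18)) : SimpleGraph (Fin 18) :=
  SimpleGraph.fromEdgeSet ↑(baseEdges ∪ C.image fun p => s(p.1, p.2))

/-- `C` is a subset of the candidate pairs for which every vertex of `Γ_C` has even
degree. -/
noncomputable def Good (C : Finset (Fin 18 × Fin 18)) : Prop :=
  C ⊆ candPairs ∧ ∀ v : Fin 18, Even ((Γ C).degree v)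

/-- Graph isomorphism between `Γ_C` and `Γ_{C'}`. -/
noncomputable def isoRel (C C' : {C : Finset (Fin 18 × Fin 18) // Good C}) : Prop :=
  Nonempty (Γ C.1 ≃g Γ C'.1)

section Computation

/-! Computable decidability instances, given precedence over the classical one. -/

instance (priority := 5000) prioAnd {p q : Prop} [Decidable p] [Decidable q] : Decidable (p ∧ q) := instDecidableAnd
instance (priority := 5000) prioOr {p q : Prop} [Decidable p] [Decidable q] : Decidable (p ∨ q) := instDecidableOr
instance (priority := 5000) prioIff {p q : Prop} [Decidable p] [Decidable q] : Decidable (p ↔ q) := instDecidableIff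
instance (priority := 5000) prioNot {p : Prop} [Decidable p] : Decidable (¬p) := instDecidableNot
instance (priority := 5000) prioNe {α : Type} [DecidableEq α] (a b : α) : Decidable (a ≠ b) := instDecidableNot
instance (priority := 5000) prioBool : DecidableEq Bool := instDecidableEqBool
instance (priority := 5000) prioNat : DecidableEq ℕ := instDecidableEqNat
instance (priority := 5000) prioFin (n : ℕ) : DecidableEq (Fin n) := instDecidableEqFin n
instance (priority := 5000) prioList : DecidableEq (List ℕ) := instDecidableEqList
instance (priority := 5000) prioLt (a b : ℕ) : Decidable (a < b) := Nat.decLt a b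
instance (priority := 5000) prioEven (a : ℕ) : Decidable (Even a) :=
  decidable_of_iff (a % 2 = 0) Nat.even_iff.symm
instance (priority := 5000) prioMem (a : ℕ) (l : List ℕ) : Decidable (a ∈ l) := List.instDecidableMemOfLawfulBEq a l
instance (priority := 5000) prioBall (l : List ℕ) (p : ℕ → Prop) [DecidablePred p] : Decidable (∀ a ∈ l, p a) :=
  List.decidableBAll p l
instance (priority := 4000) prioImp {p q : Prop} [Decidable p] [Decidable q] : Decidable (p → q) :=
  if hp : p then if hq : q then isTrue fun _ => hq else isFalse fun h => hq (h hp)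
  else isTrue fun h => absurd h hp
instance (priority := 5000) prioForall (n : ℕ) (p : Fin n → Prop) [DecidablePred p] : Decidable (∀ a, p a) :=
  Nat.decidableForallFin p
instance (priority := 5000) prioExists (n : ℕ) (p : Fin n → Prop) [DecidablePred p] : Decidable (∃ a, p a) :=
  Nat.decidableExistsFin p

/-- Boolean table of the base edges. -/
def baseB (v u : Fin 18) : Bool := Nat.testBit 842715306275175953718208482570400783194253202667034918519924394529700103465926111977042156454410 (18 * v.val + u.val)

/-- Boolean table of the candidate pairs. -/
def candB (v u : Fin 18) : Bool := Nat.testBit 1088908226458932532832706532239791139897600 (18 * v.val + u.val)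

/-- Whether the pair `(t; s)` is selected by the mask `m`: bit `i < 4` of `m` belongs to the
equatorial vertex `14 + i`, bit `4 + i` to the vertex `9 + i`. -/
def val (m : ℕ) (t s : Fin 18) : Bool :=
  bif Nat.blt t.val 4 then
    bif Nat.beq s.val 8 then !(xor (m.testBit t.val) (m.testBit ((t.val + 1) % 4)))
    else m.testBit (s.val - 14)
  else
    bif Nat.beq s.val 13 then !(xor (m.testBit t.val) (m.testBit (4 + (t.val + 1) % 4)))
    else m.testBit (s.val - 5)

/-- Adjacency built from a selection `c` of candidate pairs. -/
def adjC (c : Fin 18 → Fin 18 → Bool) (v u : Fin 18) : Bool :=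
  baseB v u || (candB v u && c v u) || (candB u v && c u v)

/-- Number of walks of length `k` starting from `v`. -/
def wk (a : Fin 18 → Fin 18 → Bool) : ℕ → Fin 18 → ℕ
  | 0, _ => 1
  | k + 1, v => ∑ u : Fin 18, bif a v u then wk a k u else 0

/-- Number of walks of length six. -/
def invB (a : Fin 18 → Fin 18 → Bool) : ℕ := ∑ v : Fin 18, wk a 3 v * wk a 3 v

/-- Masks of the thirty representatives. -/
def repList : List ℕ := [0, 1, 3, 5, 7, 15, 17, 19, 20, 21, 22, 23, 28, 29, 31, 51, 53, 55, 57, 58, 59, 61, 63, 85, 87, 95, 119, 123, 127, 255]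

set_option synthInstance.maxHeartbeats 400000 in
set_option synthInstance.maxSize 10000 in
theorem mem_base_iff (v u : Fin 18) : s(v, u) ∈ baseEdges ↔ baseB v u = true := by
  unfold baseEdges
  simp only [Finset.mem_insert, Finset.mem_singleton, Sym2.eq_iff]
  revert v u
  decide +kernel

theorem mem_cand_iff (v u : Fin 18) : (v, u) ∈ candPairs ↔ candB v u = true := by
  unfold candPairs
  simp only [Finset.mem_insert, Finset.mem_singleton, Prod.mk.injEq]
  revert v u
  decide +kernel

theorem adjC_irrefl_table : ∀ v : Fin 18, baseB v v = false ∧ candB v v = false := by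
  decide +kernel

theorem invB_reps : repList.map (fun m => invB (adjC (val m))) =
    [186624, 174936, 240480, 174520, 317672, 554144, 164064, 235888, 161168, 161872, 228552, 312376, 224424, 303400, 548576, 314928, 229040, 406528, 295504, 232256, 394104, 378208, 653560, 161120, 311384, 557784, 501024, 481152, 771608, 1091136] := by
  decide +kernel

theorem even_reps : ∀ m ∈ repList, ∀ v : Fin 18, wk (adjC (val m)) 1 v % 2 = 0 := by
  decide +kernel

/-- Rotation of the vertices. -/
def rotV : Fin 18 → Fin 18 := ![1, 2, 3, 0, 5, 6, 7, 4, 8, 10, 11, 12, 9, 13, 15, 16, 17, 14]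
/-- Reflection of the vertices. -/
def refV : Fin 18 → Fin 18 := ![0, 3, 2, 1, 7, 6, 5, 4, 8, 9, 12, 11, 10, 13, 15, 14, 17, 16]
/-- Exchange of the two hemispheres. -/
def swV : Fin 18 → Fin 18 := ![4, 5, 6, 7, 1, 2, 3, 0, 13, 15, 16, 17, 14, 8, 9, 10, 11, 12]

/-- Move the eight bits of a mask. -/
def moveBits (l : List ℕ) (m : ℕ) : ℕ :=
  (l.zipIdx.map fun p => bif m.testBit p.2 then 2 ^ p.1 else 0).sum

def rotM : ℕ → ℕ := moveBits [1, 2, 3, 0, 5, 6, 7, 4]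
def refM : ℕ → ℕ := moveBits [1, 0, 3, 2, 4, 7, 6, 5]
def swM : ℕ → ℕ := moveBits [4, 5, 6, 7, 1, 2, 3, 0]

/-- `f` acts on the family of graphs as the map `g` on masks. -/
def Compat (f : Fin 18 → Fin 18) (g : ℕ → ℕ) : Prop :=
  (∀ v u, f v = f u → v = u) ∧ (∀ v u, baseB v u = baseB (f v) (f u)) ∧
  (∀ v u, candB v u = candB (f v) (f u)) ∧
  (∀ v u, candB v u = true → ∀ m : Fin 256, val m v u = val (g m) (f v) (f u)) ∧
  (∀ m : Fin 256, g m < 256)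

theorem rot_compat : Compat rotV rotM := by
  unfold Compat; decide +kernel

theorem ref_compat : Compat refV refM := by
  unfold Compat; decide +kernel

theorem sw_compat : Compat swV swM := by
  unfold Compat; decide +kernel

theorem orbit_table : ∀ m : Fin 256, ∃ i : Fin 4, ∃ j : Fin 2, ∃ k : Fin 2,
    rotM^[i] (refM^[j] (swM^[k] m)) ∈ repList := by
  decide +kernel

theorem full_table : ∀ v u, candB v u = true → val 255 v u = true := by
  decide +kernel

theorem mem_full : 255 ∈ repList := by
  decide +kernel

/-- Local structure at an equatorial vertex `v`: four base edges, and candidates from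
two vertices. -/
def Two (v t t' : Fin 18) : Prop :=
  ∑ u, (baseB v u).toNat = 4 ∧ ∀ u, candB v u = false ∧
    (candB u v = true → baseB v u = false) ∧ candB u v = (u == t || u == t') ∧ t ≠ t'

/-- Local structure at a vertex `v` of the squares: three base edges, and candidates to
three vertices. -/
def Three (v s s' s'' : Fin 18) : Prop :=
  ∑ u, (baseB v u).toNat = 3 ∧ ∀ u, candB u v = false ∧
    (candB v u = true → baseB v u = false) ∧ candB v u = (u == s || u == s' || u == s'') ∧
    s ≠ s' ∧ s ≠ s'' ∧ s' ≠ s''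

theorem wk_two (c : Fin 18 → Fin 18 → Bool) (v t t' : Fin 18) (h : Two v t t') :
    wk (adjC c) 1 v = 4 + ((c t v).toNat + (c t' v).toNat) := by
  obtain ⟨h4, h⟩ := h
  have e : ∀ u, (bif adjC c v u then wk (adjC c) 0 u else 0) = (baseB v u).toNat +
      ((if u = t then (c t v).toNat else 0) + (if u = t' then (c t' v).toNat else 0)) := by
    intro u
    obtain ⟨h1, h2, h3, hne⟩ := h u
    unfold adjC
    rw [h1]
    rw [h3] at h2 ⊢
    by_cases ht : u = t
    · subst ht
      simp at h2
      cases c u v <;> simp [h2, hne, wk]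
    · by_cases ht' : u = t'
      · subst ht'
        simp at h2
        cases c u v <;> simp [h2, ht, wk]
      · cases hb : baseB v u <;> simp [beq_false_of_ne ht, beq_false_of_ne ht', ht, ht', wk]
  change ∑ u : Fin 18, (bif adjC c v u then wk (adjC c) 0 u else 0) = _
  simp only [e, Finset.sum_add_distrib, Finset.sum_ite_eq', h4, Finset.mem_univ, if_true]

theorem wk_three (c : Fin 18 → Fin 18 → Bool) (v s s' s'' : Fin 18) (h : Three v s s' s'') :
    wk (adjC c) 1 v = 3 + ((c v s).toNat + (c v s').toNat + (c v s'').toNat) := by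
  obtain ⟨h4, h⟩ := h
  have e : ∀ u, (bif adjC c v u then wk (adjC c) 0 u else 0) = (baseB v u).toNat +
      ((if u = s then (c v s).toNat else 0) + (if u = s' then (c v s').toNat else 0) +
        (if u = s'' then (c v s'').toNat else 0)) := by
    intro u
    obtain ⟨h1, h2, h3, hne, hne', hne''⟩ := h u
    unfold adjC
    rw [h1]
    rw [h3] at h2 ⊢
    by_cases ht : u = s
    · subst ht
      simp at h2
      cases c v u <;> simp [h2, hne, hne', wk]
    · by_cases ht' : u = s'
      · subst ht'
        simp at h2
        cases c v u <;> simp [h2, ht, hne'', wk]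
      · by_cases ht'' : u = s''
        · subst ht''
          simp at h2
          cases c v u <;> simp [h2, ht, ht', wk]
        · cases hb : baseB v u <;> simp [beq_false_of_ne ht, beq_false_of_ne ht',
            beq_false_of_ne ht'', ht, ht', ht'', wk]
  change ∑ u : Fin 18, (bif adjC c v u then wk (adjC c) 0 u else 0) = _
  simp only [e, Finset.sum_add_distrib, Finset.sum_ite_eq', h4, Finset.mem_univ, if_true]

/-- Parity conditions at the vertices, in terms of the selection. -/
theorem parity_solve (c : Fin 18 → Fin 18 → Bool)
    (h : ∀ v, Even (wk (adjC c) 1 v)) (m : ℕ)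
    (h0 : m.testBit 0 = c 0 14) (h1 : m.testBit 1 = c 0 15) (h2 : m.testBit 2 = c 1 16)
    (h3 : m.testBit 3 = c 2 17) (h4 : m.testBit 4 = c 4 9) (h5 : m.testBit 5 = c 4 10)
    (h6 : m.testBit 6 = c 5 11) (h7 : m.testBit 7 = c 6 12) :
    ∀ v u, candB v u = true → c v u = val m v u := by
  have two : ∀ (v t t' : Fin 18), Two v t t' →
      c t v = c t' v := by
    intro v t t' hT
    have e := wk_two c v t t' hT
    have := h v
    rw [e] at this
    revert this
    cases c t v <;> cases c t' v <;> decide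
  have three : ∀ (v s s' s'' : Fin 18), Three v s s' s'' →
      c v s = !(xor (c v s') (c v s'')) := by
    intro v s s' s'' hT
    have e := wk_three c v s s' s'' hT
    have := h v
    rw [e] at this
    revert this
    cases c v s <;> cases c v s' <;> cases c v s'' <;> decide
  have q0 := two 14 0 3 (by unfold Two; decide +kernel)
  have q1 := two 15 0 1 (by unfold Two; decide +kernel)
  have q2 := two 16 1 2 (by unfold Two; decide +kernel)
  have q3 := two 17 2 3 (by unfold Two; decide +kernel)
  have q4 := two 9 4 7 (by unfold Two; decide +kernel)
  have q5 := two 10 4 5 (by unfold Two; decide +kernel)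
  have q6 := two 11 5 6 (by unfold Two; decide +kernel)
  have q7 := two 12 6 7 (by unfold Two; decide +kernel)
  have r0 := three 0 8 14 15 (by unfold Three; decide +kernel)
  have r1 := three 1 8 15 16 (by unfold Three; decide +kernel)
  have r2 := three 2 8 16 17 (by unfold Three; decide +kernel)
  have r3 := three 3 8 17 14 (by unfold Three; decide +kernel)
  have r4 := three 4 13 9 10 (by unfold Three; decide +kernel)
  have r5 := three 5 13 10 11 (by unfold Three; decide +kernel)
  have r6 := three 6 13 11 12 (by unfold Three; decide +kernel)
  have r7 := three 7 13 12 9 (by unfold Three; decide +kernel)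
  intro v u huv
  rw [← mem_cand_iff] at huv
  unfold candPairs at huv
  simp only [Finset.mem_insert, Finset.mem_singleton, Prod.mk.injEq] at huv
  rcases huv with h | h | h | h | h | h | h | h | h | h | h | h | h | h | h | h | h | h | h |
    h | h | h | h | h <;> obtain ⟨rfl, rfl⟩ := h <;>
    simp only [val, Fin.isValue] <;> simp [*] <;>
    first | rfl | exact (Bool.not_not _).symm

end Computation

theorem adj_iff (C : Finset (Fin 18 × Fin 18)) (hC : C ⊆ candPairs) (c : Fin 18 → Fin 18 → Bool)
    (hc : ∀ v u, candB v u = true → ((v, u) ∈ C ↔ c v u = true)) (v u : Fin 18) :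
    (Γ C).Adj v u ↔ adjC c v u = true := by
  have key : ∀ v u, (v, u) ∈ C ↔ (candB v u && c v u) = true := by
    intro v u
    rw [Bool.and_eq_true]
    constructor
    · intro h
      have h' := (mem_cand_iff v u).1 (hC h)
      exact ⟨h', (hc v u h').1 h⟩
    · rintro ⟨h1, h2⟩
      exact (hc v u h1).2 h2
  have himg : s(v, u) ∈ C.image (fun p => s(p.1, p.2)) ↔ (v, u) ∈ C ∨ (u, v) ∈ C := by
    simp only [Finset.mem_image, Prod.exists, Sym2.eq_iff]
    constructor
    · rintro ⟨a, b, h, ⟨rfl, rfl⟩ | ⟨rfl, rfl⟩⟩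
      · exact Or.inl h
      · exact Or.inr h
    · rintro (h | h)
      · exact ⟨v, u, h, Or.inl ⟨rfl, rfl⟩⟩
      · exact ⟨u, v, h, Or.inr ⟨rfl, rfl⟩⟩
  unfold Γ adjC
  rw [SimpleGraph.fromEdgeSet_adj, Finset.mem_coe, Finset.mem_union, himg, mem_base_iff, key, key,
    Bool.or_eq_true, Bool.or_eq_true, or_assoc]
  constructor
  · exact fun h => h.1
  · intro h
    refine ⟨h, ?_⟩
    rintro rfl
    have := adjC_irrefl_table v
    simp [this.1, this.2] at h

theorem degree_eq (G : SimpleGraph (Fin 18)) (a : Fin 18 → Fin 18 → Bool)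
    (h : ∀ v u, G.Adj v u ↔ a v u = true) (v : Fin 18) : G.degree v = wk a 1 v := by
  rw [← SimpleGraph.card_neighborFinset_eq_degree, SimpleGraph.neighborFinset_eq_filter,
    Finset.card_filter]
  simp only [wk]
  refine Finset.sum_congr rfl fun u _ => ?_
  have := h v u
  cases hb : a v u <;> simp [this, hb]

theorem wk_iso {G H : SimpleGraph (Fin 18)} (a b : Fin 18 → Fin 18 → Bool)
    (ha : ∀ v u, G.Adj v u ↔ a v u = true) (hb : ∀ v u, H.Adj v u ↔ b v u = true)
    (e : G ≃g H) (k : ℕ) : ∀ v, wk a k v = wk b k (e v) := by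
  induction k with
  | zero => intro v; rfl
  | succ k ih =>
    intro v
    simp only [wk]
    refine Fintype.sum_equiv e.toEquiv _ _ fun u => ?_
    have h1 : a v u = b (e v) (e u) := by
      rw [Bool.eq_iff_iff, ← ha, ← hb]
      exact e.map_adj_iff.symm
    change _ = bif b (e v) (e u) then wk b k (e u) else 0
    rw [h1, ih u]

theorem invB_iso {G H : SimpleGraph (Fin 18)} (a b : Fin 18 → Fin 18 → Bool)
    (ha : ∀ v u, G.Adj v u ↔ a v u = true) (hb : ∀ v u, H.Adj v u ↔ b v u = true)
    (e : G ≃g H) : invB a = invB b := by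
  unfold invB
  refine Fintype.sum_equiv e.toEquiv _ _ fun u => ?_
  rw [wk_iso a b ha hb e 3 u]
  rfl

/-- The set of candidate pairs encoded by a mask. -/
noncomputable def cfg (m : ℕ) : Finset (Fin 18 × Fin 18) :=
  candPairs.filter fun p => val m p.1 p.2 = true

theorem cfg_adj (m : ℕ) (v u : Fin 18) : (Γ (cfg m)).Adj v u ↔ adjC (val m) v u = true := by
  refine adj_iff (cfg m) (Finset.filter_subset _ _) (val m) (fun v u h => ?_) v u
  unfold cfg
  rw [Finset.mem_filter, mem_cand_iff]
  simp [h]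

theorem good_cfg (m : ℕ) (hm : m ∈ repList) : Good (cfg m) := by
  refine ⟨Finset.filter_subset _ _, fun v => ?_⟩
  have := degree_eq _ _ (cfg_adj m) v
  rw [Nat.even_iff]
  have h2 := even_reps m hm v
  rw [← this] at h2
  convert h2

theorem exists_mask (C : Finset (Fin 18 × Fin 18)) (hC : Good C) :
    ∃ m : Fin 256, C = cfg m := by
  obtain ⟨hs, hd⟩ := hC
  let c : Fin 18 → Fin 18 → Bool := fun v u => decide ((v, u) ∈ C)
  have hadj := adj_iff C hs c (fun v u _ => by simp [c])
  have hdeg : ∀ v, Even (wk (adjC c) 1 v) := by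
    intro v
    rw [← degree_eq _ _ hadj v]
    convert hd v
  let b : Fin 8 → Bool := ![c 0 14, c 0 15, c 1 16, c 2 17, c 4 9, c 4 10, c 5 11, c 6 12]
  have hb : ∀ i : Fin 8, (Nat.ofBits b).testBit i = b i := fun i =>
    Nat.testBit_ofBits_lt b i i.2
  refine ⟨⟨Nat.ofBits b, Nat.ofBits_lt_two_pow b⟩, ?_⟩
  have := parity_solve c hdeg (Nat.ofBits b) (hb 0) (hb 1) (hb 2) (hb 3) (hb 4) (hb 5)
    (hb 6) (hb 7)
  ext ⟨v, u⟩
  unfold cfg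
  rw [Finset.mem_filter]
  constructor
  · intro h
    have h1 := hs h
    refine ⟨h1, ?_⟩
    rw [← this v u ((mem_cand_iff v u).1 h1)]
    simpa [c] using h
  · rintro ⟨h1, h2⟩
    rw [← this v u ((mem_cand_iff v u).1 h1)] at h2
    simpa [c] using h2

theorem compat_iso {f : Fin 18 → Fin 18} {g : ℕ → ℕ} (h : Compat f g) (m : ℕ) (hm : m < 256) :
    g m < 256 ∧ Nonempty (Γ (cfg m) ≃g Γ (cfg (g m))) := by
  obtain ⟨hinj, hbase, hcand, hval, hlt⟩ := h
  refine ⟨hlt ⟨m, hm⟩, ⟨⟨Equiv.ofBijective f (Finite.injective_iff_bijective.1 fun v u => hinj v u),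
    fun {v u} => ?_⟩⟩⟩
  have key : ∀ v u, (candB v u && val m v u) =
      (candB (f v) (f u) && val (g m) (f v) (f u)) := by
    intro v u
    rw [← hcand v u]
    cases hc : candB v u
    · rfl
    · rw [hval v u hc ⟨m, hm⟩]
  change (Γ (cfg (g m))).Adj (f v) (f u) ↔ _
  rw [cfg_adj, cfg_adj]
  unfold adjC
  rw [key v u, key u v, hbase v u]

theorem compat_iso_iterate {f : Fin 18 → Fin 18} {g : ℕ → ℕ} (h : Compat f g) (k : ℕ) :
    ∀ m < 256, g^[k] m < 256 ∧ Nonempty (Γ (cfg m) ≃g Γ (cfg (g^[k] m))) := by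
  induction k with
  | zero => exact fun m hm => ⟨hm, ⟨SimpleGraph.Iso.refl⟩⟩
  | succ k ih =>
    intro m hm
    obtain ⟨h1, ⟨e1⟩⟩ := compat_iso h m hm
    obtain ⟨h2, ⟨e2⟩⟩ := ih (g m) h1
    exact ⟨h2, ⟨e1.trans e2⟩⟩

theorem exists_rep (m : ℕ) (hm : m < 256) :
    ∃ r ∈ repList, Nonempty (Γ (cfg m) ≃g Γ (cfg r)) := by
  obtain ⟨i, j, k, h⟩ := orbit_table ⟨m, hm⟩
  obtain ⟨h1, ⟨e1⟩⟩ := compat_iso_iterate sw_compat k m hm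
  obtain ⟨h2, ⟨e2⟩⟩ := compat_iso_iterate ref_compat j _ h1
  obtain ⟨h3, ⟨e3⟩⟩ := compat_iso_iterate rot_compat i _ h2
  exact ⟨_, h, ⟨(e1.trans e2).trans e3⟩⟩

theorem isoRel_equivalence : Equivalence isoRel where
  refl _ := ⟨SimpleGraph.Iso.refl⟩
  symm := fun ⟨e⟩ => ⟨e.symm⟩
  trans := fun ⟨e⟩ ⟨e'⟩ => ⟨e.trans e'⟩

/-- The class of a representative. -/
noncomputable def repClass (i : Fin repList.length) : Quot isoRel :=
  Quot.mk _ ⟨cfg (repList.get i), good_cfg _ (List.get_mem _ _)⟩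

theorem repClass_bijective : Function.Bijective repClass := by
  constructor
  · intro i j hij
    have hrel : isoRel _ _ := (isoRel_equivalence.quot_mk_eq_iff _ _).1 hij
    obtain ⟨e⟩ := hrel
    have hinv := invB_iso _ _ (cfg_adj _) (cfg_adj _) e
    have hnd : (repList.map (fun m => invB (adjC (val m)))).Nodup := by
      rw [invB_reps]
      simp
    exact List.nodup_iff_injective_get.1 (List.Nodup.of_map _ hnd)
      (List.inj_on_of_nodup_map hnd (List.get_mem _ _) (List.get_mem _ _) hinv)
  · intro q
    induction q using Quot.ind with
    | mk C =>
      obtain ⟨C, hC⟩ := C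
      obtain ⟨m, rfl⟩ := exists_mask C hC
      obtain ⟨r, hr, ⟨e⟩⟩ := exists_rep m m.2
      obtain ⟨i, rfl⟩ := List.get_of_mem hr
      exact ⟨i, Quot.sound ⟨e.symm⟩⟩

theorem candPairs_eq : cfg 255 = candPairs := by
  unfold cfg
  rw [Finset.filter_eq_self]
  rintro ⟨v, u⟩ h
  exact full_table v u ((mem_cand_iff v u).1 h)


/-- Among the graphs `Γ_C` with all degrees even there are exactly `30`
graph-isomorphism classes; the full candidate set satisfies the condition (its class
corresponds to the monohedral tiling `FB𝒪`), and the remaining `29` classes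
correspond to the dihedral f-tilings with prototiles the Möbius triangle and the kite
derived from `FB𝒪`. -/
theorem stmt_16 : Nat.card (Quot isoRel) = 30 ∧ Good candPairs := by
  refine ⟨?_, ?_⟩
  · rw [← Nat.card_eq_of_bijective _ repClass_bijective, Nat.card_eq_fintype_card, Fintype.card_fin]
    rfl
  · rw [← candPairs_eq]
    exact good_cfg 255 mem_full
end
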